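/- Let a, b be integers with (a,b) ≠ (0,0), let p be an odd prime that is a 0-Pisano-Legendre prime relative to (a,b) with p ≡ ±1 (mod 8), let q ≥ 1 be an integer, and let G be a connected graph. Then the strong product graph C_{qπ_p(a,b)} ⊠ G is an (a,b)-Fibonacci-Legendre cordial graph modulo p. -/

import Mathlib

/-!
Write `N = q * π_p(a,b)` and label the vertex `(i, u)` of `C_N ⊠ G` by `i + N * j`, where `j` is the
position of `u` in an enumeration of the vertices of `G`. Since `π_p(a,b)` divides `N`, the label of
an edge `(i, u)(i', u')` depends only on `F_i + F_{i'}` modulo `p`. Let `ε x` be `1` if `x` is a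
nonzero square modulo `p` and `-1` otherwise; then `e(1) - e(0)` is the sum of `ε (F_i + F_{i'})`
over the edges, and twice this is the sum over ordered pairs of adjacent vertices
(`two_mul_sum_edges`). Fix the pair `(u, u')`. The pairs with `i = i'` contribute
`∑ ε (2 F_i) = ∑ ε F_i`, because `2` is a square modulo `p`; the pairs with `i' = i ± 1` contribute
`∑ ε (F_i + F_{i+1}) = ∑ ε F_{i+2}`, twice. All these are sums of `ε F` over complete periods, which
vanish exactly because `p` is a `0`-Pisano–Legendre prime. Hence `e(0) = e(1)`.
-/

noncomputable section

/-- The `(a,b)`-Fibonacci sequence: `F 0 = a`, `F 1 = b`, `F (n+2) = F n + F (n+1)`. -/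
def fibAB (a b : ℤ) : ℕ → ℤ
  | 0 => a
  | 1 => b
  | n + 2 => fibAB a b n + fibAB a b (n + 1)

/-- The `(a,b)`-Pisano period of `p`: the least positive `k` with
`F (n + k) ≡ F n (mod p)` for all `n`. -/
def pisanoAB (a b : ℤ) (p : ℕ) : ℕ :=
  sInf {k : ℕ | 0 < k ∧ ∀ n : ℕ, fibAB a b (n + k) ≡ fibAB a b n [ZMOD (p : ℤ)]}

/-- `Λ_j^p(a,b)`: the indices `ξ ∈ {0, …, π_p(a,b) - 1}` with `(F_ξ / p) = j`,
where (for odd prime `p`) the Legendre symbol is given by `jacobiSym`. -/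
def LambdaSet (a b : ℤ) (p : ℕ) (j : ℤ) : Finset ℕ :=
  (Finset.range (pisanoAB a b p)).filter fun ξ => jacobiSym (fibAB a b ξ) p = j

/-- `p` is a `k`-Pisano–Legendre prime relative to `(a,b)`. -/
def IsPLPrime (a b : ℤ) (p : ℕ) (k : ℤ) : Prop :=
  k = ((LambdaSet a b p 1).card : ℤ) - ((LambdaSet a b p (-1)).card : ℤ)
      - ((LambdaSet a b p 0).card : ℤ)

/-- `χ(a,b)`: the set of integers `k` for which some odd prime is a `k`-PL prime
relative to `(a,b)`. -/
def chiSet (a b : ℤ) : Set ℤ :=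
  {k | ∃ p : ℕ, p.Prime ∧ Odd p ∧ IsPLPrime a b p k}

/-- The order of apparition `z(p)` of `p` in the classical Fibonacci sequence. -/
def apparition (p : ℕ) : ℕ :=
  sInf {n : ℕ | 0 < n ∧ (p : ℤ) ∣ fibAB 0 1 n}

/-- The induced edge label `f_p*` on an unordered pair of vertex labels. -/
def flcEdgeLabel (a b : ℤ) (p : ℕ) : Sym2 ℕ → ℕ :=
  Sym2.lift ⟨fun x y =>
    if (p : ℤ) ∣ (fibAB a b x + fibAB a b y) then 0
    else (1 + jacobiSym (fibAB a b x + fibAB a b y) p).toNat / 2,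
    fun x y => by dsimp only; rw [add_comm (fibAB a b x) (fibAB a b y)]⟩

/-- The number of edges of `G` receiving label `i` under the vertex labeling `f`. -/
def flcCount {V : Type*} (G : SimpleGraph V) (a b : ℤ) (p : ℕ) (f : V → ℕ) (i : ℕ) : ℕ :=
  {e ∈ G.edgeSet | flcEdgeLabel a b p (e.map f) = i}.ncard

/-- `G` is an `(a,b)`-Fibonacci–Legendre cordial graph modulo `p`: there is a bijective
vertex labeling by `{0, …, |V| - 1}` with `|e(0) - e(1)| ≤ 1`. -/
def IsFLCGraph {V : Type*} [Fintype V] (G : SimpleGraph V) (a b : ℤ) (p : ℕ) : Prop :=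
  ∃ f : V ≃ Fin (Fintype.card V),
    |(flcCount G a b p (fun v => ((f v : Fin (Fintype.card V)) : ℕ)) 0 : ℤ) -
      (flcCount G a b p (fun v => ((f v : Fin (Fintype.card V)) : ℕ)) 1 : ℤ)| ≤ 1

/-- The path graph on `n` vertices. -/
def pathG (n : ℕ) : SimpleGraph (Fin n) :=
  SimpleGraph.fromRel fun i j => (i : ℕ) + 1 = (j : ℕ)

/-- The cycle graph on `n` vertices: the path graph plus the edge between the
first and last vertex. -/
def cycleG (n : ℕ) : SimpleGraph (Fin n) :=
  SimpleGraph.fromRel fun i j => (i : ℕ) + 1 = (j : ℕ) ∨ ((i : ℕ) = 0 ∧ (j : ℕ) = n - 1)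

/-- The star graph on `n` vertices with central vertex `0`. -/
def starG (n : ℕ) : SimpleGraph (Fin n) :=
  SimpleGraph.fromRel fun i _ => (i : ℕ) = 0

/-- The wheel graph on `n` vertices: hub `0` joined to every vertex of the cycle on
`1, …, n-1`. -/
def wheelG (n : ℕ) : SimpleGraph (Fin n) :=
  SimpleGraph.fromRel fun i j =>
    (i : ℕ) = 0 ∨ (i : ℕ) + 1 = (j : ℕ) ∨ ((i : ℕ) = 1 ∧ (j : ℕ) = n - 1)

/-- Lexicographic product of graphs. -/
def lexProd {α β : Type*} (G : SimpleGraph α) (H : SimpleGraph β) : SimpleGraph (α × β) :=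
  SimpleGraph.fromRel fun x y => G.Adj x.1 y.1 ∨ (x.1 = y.1 ∧ H.Adj x.2 y.2)

/-- Cartesian product of graphs. -/
def cartProd {α β : Type*} (G : SimpleGraph α) (H : SimpleGraph β) : SimpleGraph (α × β) :=
  SimpleGraph.fromRel fun x y => (x.1 = y.1 ∧ H.Adj x.2 y.2) ∨ (x.2 = y.2 ∧ G.Adj x.1 y.1)

/-- Tensor product of graphs. -/
def tensorProd {α β : Type*} (G : SimpleGraph α) (H : SimpleGraph β) : SimpleGraph (α × β) :=
  SimpleGraph.fromRel fun x y => G.Adj x.1 y.1 ∧ H.Adj x.2 y.2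

/-- Strong product of graphs: union of the cartesian and tensor products. -/
def strongProd {α β : Type*} (G : SimpleGraph α) (H : SimpleGraph β) : SimpleGraph (α × β) :=
  cartProd G H ⊔ tensorProd G H

/-- Join of two graphs: both graphs together with all edges between them. -/
def joinG {α β : Type*} (G : SimpleGraph α) (H : SimpleGraph β) : SimpleGraph (α ⊕ β) :=
  SimpleGraph.fromRel fun x y =>
    match x, y with
    | Sum.inl u, Sum.inl v => G.Adj u v
    | Sum.inr u, Sum.inr v => H.Adj u v
    | Sum.inl _, Sum.inr _ => True
    | Sum.inr _, Sum.inl _ => True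

/-- Corona `G ∘ H`: one copy of `G`, a copy of `H` for each vertex of `G`, and the
`u`-th vertex of `G` joined to every vertex of the `u`-th copy of `H`. -/
def coronaG {α β : Type*} (G : SimpleGraph α) (H : SimpleGraph β) :
    SimpleGraph (α ⊕ α × β) :=
  SimpleGraph.fromRel fun x y =>
    match x, y with
    | Sum.inl u, Sum.inl v => G.Adj u v
    | Sum.inr (u, s), Sum.inr (v, t) => u = v ∧ H.Adj s t
    | Sum.inl u, Sum.inr (v, _) => u = v
    | Sum.inr (u, _), Sum.inl v => u = v

/-- Disjoint union of a family of graphs on a common vertex type. -/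
def unionFam {ι V : Type*} (Gs : ι → SimpleGraph V) : SimpleGraph (ι × V) :=
  SimpleGraph.fromRel fun x y => x.1 = y.1 ∧ (Gs x.1).Adj x.2 y.2

/-- The sign of an edge sum: `1` on nonzero squares modulo `p`, and `-1` on nonsquares and on
multiples of `p`. -/
def flcSign (p : ℕ) (x : ℤ) : ℤ := if jacobiSym x p = 1 then 1 else -1

lemma flcSign_congr {p : ℕ} {x y : ℤ} (h : x ≡ y [ZMOD (p : ℤ)]) :
    flcSign p x = flcSign p y := by
  unfold flcSign
  rw [jacobiSym.mod_left x, jacobiSym.mod_left y, h]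

lemma flcSign_two_mul {p : ℕ} (hodd : Odd p) (h8 : p % 8 = 1 ∨ p % 8 = 7) (x : ℤ) :
    flcSign p (x + x) = flcSign p x := by
  have h2 : jacobiSym 2 p = 1 := by
    rw [jacobiSym.at_two hodd, ZMod.χ₈_nat_eq_if_mod_eight]
    have : p % 2 ≠ 0 := by omega
    simp [this, h8]
  unfold flcSign
  rw [← two_mul, jacobiSym.mul_left, h2, one_mul]

lemma jacobiSym_eq_zero_of_dvd {p : ℕ} (hp : p.Prime) {x : ℤ} (h : (p : ℤ) ∣ x) :
    jacobiSym x p = 0 := by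
  rw [jacobiSym.mod_left, Int.emod_eq_zero_of_dvd h]
  exact jacobiSym.zero_left hp.one_lt

lemma flcEdgeLabel_eq (a b : ℤ) {p : ℕ} (hp : p.Prime) (x y : ℕ) :
    flcEdgeLabel a b p s(x, y) =
      if jacobiSym (fibAB a b x + fibAB a b y) p = 1 then 1 else 0 := by
  simp only [flcEdgeLabel, Sym2.lift_mk]
  by_cases h : (p : ℤ) ∣ fibAB a b x + fibAB a b y
  · simp [h, jacobiSym_eq_zero_of_dvd hp h]
  · rcases jacobiSym.trichotomy (fibAB a b x + fibAB a b y) p with h' | h' | h' <;>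
      simp [h, h']

/-- Each edge underlies exactly two ordered pairs of adjacent vertices. -/
lemma two_mul_sum_edges {W : Type*} [Fintype W] [DecidableEq W] (H : SimpleGraph W)
    [DecidableRel H.Adj] (h : Sym2 W → ℤ) :
    2 * ∑ e ∈ H.edgeFinset, h e = ∑ x, ∑ y, if H.Adj x y then h s(x, y) else 0 := by
  have h1 : ∑ d : H.Dart, h d.edge = 2 * ∑ e ∈ H.edgeFinset, h e := by
    rw [← Finset.sum_fiberwise_of_maps_to (s := Finset.univ) (t := H.edgeFinset)
      (g := fun d : H.Dart => d.edge) (by intro d _; simp), Finset.mul_sum]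
    refine Finset.sum_congr rfl fun e he => ?_
    rw [Finset.sum_congr rfl (g := fun _ => h e)
      (by intro d hd; rw [(Finset.mem_filter.1 hd).2]), Finset.sum_const,
      H.dart_edge_fiber_card e (by simpa using he)]
    simp
  rw [← h1, ← Fintype.sum_prod_type' (f := fun x y => if H.Adj x y then h s(x, y) else 0),
    ← Finset.sum_filter]
  refine Finset.sum_bij (fun d _ => d.toProd) ?_ ?_ ?_ ?_
  · intro d _; simp
  · intro d _ d' _ hd; exact SimpleGraph.Dart.ext _ _ hd
  · intro x hx; exact ⟨⟨x, (Finset.mem_filter.1 hx).2⟩, Finset.mem_univ _, rfl⟩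
  · intro d _; rfl

/-- The difference `e(1) - e(0)` as a signed sum over edges, counted with both orientations. -/
lemma two_mul_flcCount_sub {W : Type*} [Fintype W] [DecidableEq W] (H : SimpleGraph W)
    [DecidableRel H.Adj] (a b : ℤ) {p : ℕ} (hp : p.Prime) (f : W → ℕ) :
    2 * ((flcCount H a b p f 1 : ℤ) - flcCount H a b p f 0) =
      ∑ x, ∑ y, if H.Adj x y then flcSign p (fibAB a b (f x) + fibAB a b (f y)) else 0 := by
  have hc : ∀ i, flcCount H a b p f i =
      (H.edgeFinset.filter fun e => flcEdgeLabel a b p (e.map f) = i).card := by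
    intro i
    rw [flcCount, ← Set.ncard_coe_finset]
    congr 1
    ext e
    simp
  have hs := two_mul_sum_edges H fun e =>
    (if flcEdgeLabel a b p (e.map f) = 1 then (1 : ℤ) else 0) -
      (if flcEdgeLabel a b p (e.map f) = 0 then 1 else 0)
  rw [Finset.sum_sub_distrib, Finset.sum_boole, Finset.sum_boole, ← hc, ← hc] at hs
  rw [hs]
  refine Finset.sum_congr rfl fun x _ => Finset.sum_congr rfl fun y _ => ?_
  rw [Sym2.map_mk, flcEdgeLabel_eq a b hp, flcSign]
  split_ifs <;> simp_all

lemma sum_flcSign_period {a b : ℤ} {p : ℕ} (hPL : IsPLPrime a b p 0) :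
    ∑ i ∈ Finset.range (pisanoAB a b p), flcSign p (fibAB a b i) = 0 := by
  unfold IsPLPrime LambdaSet at hPL
  rw [hPL]
  simp only [← Finset.sum_boole, ← Finset.sum_sub_distrib]
  refine Finset.sum_congr rfl fun i _ => ?_
  rcases jacobiSym.trichotomy (fibAB a b i) p with h' | h' | h' <;> simp [h', flcSign]

lemma fibAB_add_mul_modEq {a b : ℤ} {p P : ℕ}
    (h : ∀ n, fibAB a b (n + P) ≡ fibAB a b n [ZMOD (p : ℤ)]) (n k : ℕ) :
    fibAB a b (n + P * k) ≡ fibAB a b n [ZMOD (p : ℤ)] := by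
  induction k with
  | zero => rfl
  | succ k ih => rw [Nat.mul_succ, ← add_assoc]; exact (h _).trans ih

/-- A period shorter than `3` forces the sequence to vanish modulo `p`, so that every sign in the
period is `-1`. -/
lemma three_le_pisanoAB {a b : ℤ} {p : ℕ} (hp : p.Prime) (hPL : IsPLPrime a b p 0)
    (h0 : 0 < pisanoAB a b p)
    (h : ∀ n, fibAB a b (n + pisanoAB a b p) ≡ fibAB a b n [ZMOD (p : ℤ)]) :
    3 ≤ pisanoAB a b p := by
  by_contra hlt
  have hrec : ∀ n, fibAB a b (n + 2) = fibAB a b n + fibAB a b (n + 1) := fun n => rfl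
  have hz : ∀ n, (p : ℤ) ∣ fibAB a b n := by
    have hcase : pisanoAB a b p = 1 ∨ pisanoAB a b p = 2 := by omega
    intro n
    rcases hcase with h1 | h1 <;> rw [h1] at h
    · have := (h (n + 1)).symm.dvd
      rw [show n + 1 + 1 = n + 2 from rfl, hrec] at this
      simpa using this
    · have h3 := (h n).symm.dvd
      have h4 := (h (n + 1)).symm.dvd
      rw [hrec, add_sub_cancel_left] at h3
      rw [hrec (n + 1), hrec, add_sub_cancel_left] at h4
      exact (dvd_add_left h3).1 h4
  have hs := sum_flcSign_period hPL
  have : ∀ i ∈ Finset.range (pisanoAB a b p), flcSign p (fibAB a b i) = -1 := by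
    intro i _
    simp [flcSign, jacobiSym_eq_zero_of_dvd hp (hz i)]
  rw [Finset.sum_congr rfl this] at hs
  simp at hs
  omega

lemma val_cyclic_succ {n : ℕ} [NeZero n] (hn : 3 ≤ n) (k : Fin n) :
    (k + 1).val = if k.val + 1 = n then 0 else k.val + 1 := by
  have hk := k.isLt
  rw [Fin.val_add, Fin.val_one', Nat.mod_eq_of_lt (show 1 < n by omega)]
  split_ifs with h
  · rw [h, Nat.mod_self]
  · exact Nat.mod_eq_of_lt (by omega)

/-- Adjacency in the cycle is the cyclic successor relation in one direction or the other. -/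
lemma cycleG_adj_iff {n : ℕ} [NeZero n] (hn : 3 ≤ n) (i j : Fin n) :
    (cycleG n).Adj i j ↔ (j = i + 1 ∨ i = j + 1) := by
  have hi := i.isLt
  have hj := j.isLt
  simp only [cycleG, SimpleGraph.fromRel_adj, ne_eq, Fin.ext_iff, val_cyclic_succ hn]
  split_ifs <;> omega

/-- For `n ≥ 3` an edge of the cycle has only one direction. -/
lemma not_succ_both {n : ℕ} [NeZero n] (hn : 3 ≤ n) (i j : Fin n) (h : j = i + 1)
    (h' : i = j + 1) : False := by
  have hi := i.isLt
  have hj := j.isLt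
  simp only [Fin.ext_iff, val_cyclic_succ hn] at h h'
  split_ifs at h h' <;> omega

lemma sum_cycleG_adj {n : ℕ} [NeZero n] (hn : 3 ≤ n) (g : Fin n → Fin n → ℤ)
    (hg : ∀ i j, g i j = g j i) [DecidableRel (cycleG n).Adj] :
    (∑ i, ∑ j, if (cycleG n).Adj i j then g i j else 0) = 2 * ∑ i, g i (i + 1) := by
  have h1 : ∀ i j, (if (cycleG n).Adj i j then g i j else 0) =
      (if j = i + 1 then g i j else 0) + (if i = j + 1 then g i j else 0) := by
    intro i j
    have := not_succ_both hn i j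
    rw [if_congr (cycleG_adj_iff hn i j) rfl rfl]
    split_ifs <;> first | tauto | simp
  simp only [h1, Finset.sum_add_distrib]
  rw [Finset.sum_comm (f := fun i j => if i = j + 1 then g i j else 0)]
  simp only [Finset.sum_ite_eq', Finset.mem_univ, if_true]
  rw [two_mul]
  congr 1
  exact Finset.sum_congr rfl fun i _ => hg _ _

lemma strongProd_adj_iff {α β : Type*} (G : SimpleGraph α) (H : SimpleGraph β) (i j : α)
    (u v : β) : (strongProd G H).Adj (i, u) (j, v) ↔
      (u = v ∧ G.Adj i j) ∨ (H.Adj u v ∧ (i = j ∨ G.Adj i j)) := by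
  have := G.adj_comm i j
  have := H.adj_comm u v
  have := G.ne_of_adj (a := i) (b := j)
  have := H.ne_of_adj (a := u) (b := v)
  simp only [strongProd, cartProd, tensorProd, SimpleGraph.sup_adj, SimpleGraph.fromRel_adj, ne_eq,
    Prod.mk.injEq]
  grind

/-- For `(a,b) ≠ (0,0)`, an odd prime `p ≡ ±1 (mod 8)` that is a
`0`-PL prime relative to `(a,b)`, `q ≥ 1`, and a connected graph `G`, the strong
product `C_{q·π_p(a,b)} ⊠ G` is an `(a,b)`-FLC graph modulo `p`. -/
theorem strongProd_cycle_isFLCGraph (a b : ℤ) (hab : (a, b) ≠ (0, 0)) (p : ℕ)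
    (hp : p.Prime) (hodd : Odd p) (hPL : IsPLPrime a b p 0)
    (h8 : p % 8 = 1 ∨ p % 8 = 7) (q : ℕ) (hq : 1 ≤ q)
    {V : Type} [Fintype V] (G : SimpleGraph V) (hG : G.Connected) :
    IsFLCGraph (strongProd (cycleG (q * pisanoAB a b p)) G) a b p := by
  classical
  rcases Nat.eq_zero_or_pos (pisanoAB a b p) with hπ | hπ
  · -- with no vertices there are no edges (this case in fact never arises)
    have hE : IsEmpty (Fin (q * pisanoAB a b p) × V) := by
      rw [hπ, mul_zero]; infer_instance
    refine ⟨Fintype.equivFin _, ?_⟩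
    have hc := two_mul_flcCount_sub (strongProd (cycleG (q * pisanoAB a b p)) G) a b hp
      (fun v => ((Fintype.equivFin _ v : Fin (Fintype.card _)) : ℕ))
    rw [Finset.univ_eq_empty, Finset.sum_empty] at hc
    rw [abs_le]; constructor <;> linarith
  have hper : ∀ n, fibAB a b (n + pisanoAB a b p) ≡ fibAB a b n [ZMOD (p : ℤ)] :=
    (Nat.sInf_mem (Nat.nonempty_of_pos_sInf hπ)).2
  have h3 := three_le_pisanoAB hp hPL hπ hper
  set P := pisanoAB a b p with hP
  obtain ⟨N, hN⟩ : ∃ N, N = q * P := ⟨_, rfl⟩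
  rw [← hN]
  have hN3 : 3 ≤ N := by rw [hN]; nlinarith
  have : NeZero N := ⟨by omega⟩
  have hperN : ∀ n k, fibAB a b (n + N * k) ≡ fibAB a b n [ZMOD (p : ℤ)] := by
    intro n k
    rw [hN, show q * P * k = P * (q * k) by ring]
    exact fibAB_add_mul_modEq hper n _
  -- a sum of signs over `q` full periods vanishes
  have hsum : ∑ i : Fin N, flcSign p (fibAB a b i) = 0 := by
    rw [Fin.sum_univ_eq_sum_range (fun i => flcSign p (fibAB a b i)), hN]
    clear hN hq
    induction q with
    | zero => simp
    | succ k ih =>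
      rw [Nat.succ_mul, Finset.sum_range_add, ih, zero_add, ← sum_flcSign_period hPL]
      refine Finset.sum_congr rfl fun i _ => flcSign_congr ?_
      rw [add_comm, mul_comm]
      exact fibAB_add_mul_modEq hper i k
  have hval : ∀ i : Fin N, fibAB a b (i + 1 : Fin N) ≡ fibAB a b (i + 1 : ℕ) [ZMOD (p : ℤ)] := by
    intro i
    have h := hperN (((i : ℕ) + 1) % N) (((i : ℕ) + 1) / N)
    rw [Nat.mod_add_div] at h
    rw [Fin.val_add, Fin.val_one', Nat.mod_eq_of_lt (show 1 < N by omega)]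
    exact h.symm
  set g : Fin N → Fin N → ℤ := fun i j => flcSign p (fibAB a b i + fibAB a b j) with hgdef
  have hdiag : ∑ i, g i i = 0 := by
    rw [← hsum]
    exact Finset.sum_congr rfl fun i _ => flcSign_two_mul hodd h8 _
  have hcyc : (∑ i, ∑ j, if (cycleG N).Adj i j then g i j else 0) = 0 := by
    rw [sum_cycleG_adj hN3 g (fun i j => by simp only [hgdef, add_comm])]
    have hshift : ∀ i, g i (i + 1) = flcSign p (fibAB a b ((i + (1 + 1) : Fin N) : ℕ)) := by
      intro i
      refine flcSign_congr ?_
      -- adding `1` before or after reducing `i + 1` modulo `N` gives the same residue `F_{i+2}`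
      have hw : fibAB a b (((i : ℕ) + 1 : ℕ) + 1) ≡
          fibAB a b ((i + 1 : Fin N) + 1 : ℕ) [ZMOD (p : ℤ)] := by
        have h := hperN (((i : ℕ) + 1) % N + 1) (((i : ℕ) + 1) / N)
        rw [show ((i : ℕ) + 1) % N + 1 + N * (((i : ℕ) + 1) / N) = (i : ℕ) + 1 + 1 by
          have := Nat.mod_add_div ((i : ℕ) + 1) N; omega] at h
        rw [Fin.val_add, Fin.val_one', Nat.mod_eq_of_lt (show 1 < N by omega)]
        exact h
      rw [← add_assoc]
      refine ((hval i).add_left _).trans ?_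
      exact Int.ModEq.trans hw (hval (i + 1)).symm
    simp only [hshift]
    have hrot := Equiv.sum_comp (Equiv.addRight (1 + 1 : Fin N))
      (fun i : Fin N => flcSign p (fibAB a b (i : ℕ)))
    simp only [Equiv.coe_addRight] at hrot
    rw [hrot, hsum, mul_zero]
  let f : Fin N × V ≃ Fin (Fintype.card (Fin N × V)) :=
    (Equiv.prodComm _ _).trans <| ((Fintype.equivFin V).prodCongr (Equiv.refl _)).trans <|
      finProdFinEquiv.trans <| finCongr (by simp [mul_comm])
  have hf : ∀ i u, ((f (i, u) : Fin _) : ℕ) = i + N * (Fintype.equivFin V u : ℕ) := fun i u => rfl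
  refine ⟨f, ?_⟩
  have hc := two_mul_flcCount_sub (strongProd (cycleG N) G) a b hp
    (fun v => ((f v : Fin (Fintype.card (Fin N × V))) : ℕ))
  have hzero : (∑ x, ∑ y, if (strongProd (cycleG N) G).Adj x y then
      flcSign p (fibAB a b (f x : ℕ) + fibAB a b (f y : ℕ)) else 0) = 0 := by
    simp only [Fintype.sum_prod_type_right]
    refine Finset.sum_eq_zero fun u _ => ?_
    rw [Finset.sum_comm]
    refine Finset.sum_eq_zero fun v _ => ?_
    have hg : ∀ i j, flcSign p (fibAB a b (f (i, u) : ℕ) + fibAB a b (f (j, v) : ℕ)) = g i j := by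
      intro i j
      rw [hf, hf]
      exact flcSign_congr ((hperN _ _).add (hperN _ _))
    simp only [hg, strongProd_adj_iff]
    by_cases huv : u = v
    · subst huv
      simpa using hcyc
    · by_cases hadj : G.Adj u v
      · have hsplit : ∀ i j, (if (u = v ∧ (cycleG N).Adj i j) ∨
            (G.Adj u v ∧ (i = j ∨ (cycleG N).Adj i j)) then g i j else 0) =
            (if i = j then g i j else 0) + (if (cycleG N).Adj i j then g i j else 0) := by
          intro i j
          have := (cycleG N).ne_of_adj (a := i) (b := j)
          by_cases hij : i = j <;> by_cases hc : (cycleG N).Adj i j <;> simp_all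
        simp only [hsplit, Finset.sum_add_distrib, hcyc, add_zero]
        simpa using hdiag
      · simp [huv, hadj]
  rw [hzero] at hc
  rw [abs_le]; constructor <;> linarith
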